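/- arXiv:1809.07982 — 2 statements merged into one kernel-verified Lean document; each statement's English description precedes it below -/
import Mathlib

section
/- Let q be an odd prime and r a positive integer with q^r > 45, let K be a finite field with q^r elements, and let g be a generator of the multiplicative group K^×. Then for every element k ∈ K there exist odd integers m and n such that (g^m − g^{−m})·g^n − (g^m + g^{−m}) = k. -/
/-!
Odd powers of `g` are exactly the nonsquares of `K`. With `x = g ^ m` and `y = g ^ n` the equation
reads `y * (x ^ 2 - 1) = x ^ 2 + k * x + 1`, so it suffices to find a nonsquare `x` at which
`F = (X ^ 2 - 1) * (X ^ 2 + k * X + 1)` takes a nonsquare value.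

If `|K| ≡ 3 mod 4`, then `F(x⁻¹) = -F(x) / x ^ 4` and `-1` is not a square, so `x` or `x⁻¹` works as
soon as `F(x) ≠ 0`.

If `|K| = 2 * h + 1` is large and there is no such `x`, then `F(x) ^ h = 1` at all but a few of the
`h` elements with `x ^ h = -1`. By Stepanov's method some `∑ j, X ^ (h * j) * (a j + F ^ h * b j)`,
with `a j` and `b j` of small degree, vanishes to high order at all these points. This polynomial is
nonzero because `F(0) * F` is not a square, and it has too many zeros for its degree.

In the 23 fields with `|K| ≡ 1 mod 4` and `45 < |K| < 257` a computation finds an `x` for every `k`.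
-/

open Polynomial Finset

section HasseStable
variable {R : Type*} [CommSemiring R]

/-- The polynomials `A` dividing `P ^ k * hasseDeriv k A` for every `k`. Products of divisors of `P`
with arbitrary multiplicities belong to it, so that after multiplication by `P ^ k` large powers
can be factored out of a Hasse derivative. -/
def hasseStable (P : R[X]) : Submonoid R[X] where
  carrier := {A | ∀ k, A ∣ P ^ k * hasseDeriv k A}
  one_mem' _ := one_dvd _
  mul_mem' {A B} hA hB k := by
    rw [hasseDeriv_mul, mul_sum]
    refine dvd_sum fun ij hij ↦ ?_
    rw [← mem_antidiagonal.1 hij, pow_add, mul_mul_mul_comm]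
    exact mul_dvd_mul (hA ij.1) (hB ij.2)

lemma mem_hasseStable_of_dvd {A P : R[X]} (h : A ∣ P) : A ∈ hasseStable P
  | 0 => by simp
  | k + 1 => (h.trans (dvd_pow_self P k.succ_ne_zero)).mul_right _

lemma dvd_pow_mul_hasseDeriv_mul {A P : R[X]} (hA : A ∈ hasseStable P) (B : R[X]) (k : ℕ) :
    A ∣ P ^ k * hasseDeriv k (A * B) := by
  rw [hasseDeriv_mul, mul_sum]
  refine dvd_sum fun ij hij ↦ ?_
  rw [← mem_antidiagonal.1 hij, pow_add, mul_mul_mul_comm]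
  exact (hA ij.1).mul_right _

end HasseStable

section Polynomial

lemma X_sub_C_pow_dvd_of_hasseDeriv {R : Type*} [CommRing R] {f : R[X]} {x : R}
    {M : ℕ} (h : ∀ k < M, (hasseDeriv k f).eval x = 0) : (X - C x) ^ M ∣ f := by
  rw [X_sub_C_pow_dvd_iff, X_pow_dvd_iff]
  intro k hk
  rw [← taylor_apply, taylor_coeff, h k hk]

lemma natDegree_le_of_mem_degreeLT {R : Type*} [Semiring R] {a : R[X]} {D : ℕ}
    (ha : a ∈ degreeLT R D) : a.natDegree ≤ D :=
  natDegree_le_of_degree_le (mem_degreeLT.1 ha).le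

lemma finrank_degreeLT {R : Type*} [CommRing R] [Nontrivial R] (n : ℕ) :
    Module.finrank R (degreeLT R n) = n := by
  rw [(degreeLTEquiv R n).finrank_eq, Module.finrank_fin_fun]

lemma mem_degreeLT_of_mul_eq_pow_mul_hasseDeriv {R : Type*} [CommRing R] [IsDomain R]
    {A B Q P : R[X]} {k D : ℕ} (hA : A ≠ 0) (h : A * Q = P ^ k * hasseDeriv k (A * B))
    (hB : B ∈ degreeLT R D) : Q ∈ degreeLT R (D + k * (P.natDegree - 1)) := by
  by_cases hQ : Q = 0
  · simp [hQ]
  have hAQ : A * Q ≠ 0 := mul_ne_zero hA hQ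
  have hB0 : B ≠ 0 := by rintro rfl; simp [hQ, hA] at h
  have hk : k ≤ A.natDegree + B.natDegree := by
    by_contra! hlt
    rw [← natDegree_mul hA hB0] at hlt
    rw [h, hasseDeriv_eq_zero_of_lt_natDegree _ _ hlt, mul_zero] at hAQ
    exact hAQ rfl
  have hdeg : A.natDegree + Q.natDegree ≤
      k * P.natDegree + (A.natDegree + B.natDegree - k) :=
    calc A.natDegree + Q.natDegree = (A * Q).natDegree := (natDegree_mul hA hQ).symm
      _ ≤ (P ^ k).natDegree + (hasseDeriv k (A * B)).natDegree := h ▸ natDegree_mul_le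
      _ ≤ _ := by
        rw [natDegree_pow, ← natDegree_mul hA hB0]
        exact Nat.add_le_add_left (natDegree_hasseDeriv_le _ _) _
  rw [mem_degreeLT, degree_eq_natDegree hB0, Nat.cast_lt] at hB
  rw [mem_degreeLT, degree_eq_natDegree hQ, Nat.cast_lt, Nat.mul_sub_one]
  have : k ≤ k * P.natDegree ∨ P.natDegree = 0 :=
    (Nat.eq_zero_or_pos P.natDegree).symm.imp_left (Nat.le_mul_of_pos_right k)
  lia

lemma isSquare_of_mul_sq_eq_sq {R : Type*} [CommRing R] [IsDomain R] [IsIntegrallyClosed R]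
    {f a b : R} (ha : a ≠ 0) (h : f * a ^ 2 = b ^ 2) : IsSquare f := by
  have hab : a ^ 2 ∣ b ^ 2 := ⟨f, by rw [← h, mul_comm]⟩
  obtain ⟨s, rfl⟩ := (IsIntegrallyClosed.pow_dvd_pow_iff two_ne_zero).1 hab
  exact ⟨s, mul_right_cancel₀ (pow_ne_zero 2 ha) (by rw [h]; ring)⟩

variable {K : Type*} [Field K]

lemma mul_card_le_natDegree {f : K[X]} (hf : f ≠ 0) {Z : Finset K} {M : ℕ}
    (hZ : ∀ x ∈ Z, (X - C x) ^ M ∣ f) : M * #Z ≤ f.natDegree := by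
  have hdvd : ∏ x ∈ Z, (X - C x) ^ M ∣ f :=
    prod_dvd_of_coprime
      (fun x _ y _ hxy ↦ (pairwise_coprime_X_sub_C Function.injective_id hxy).pow) hZ
  calc M * #Z = (∏ x ∈ Z, (X - C x) ^ M).natDegree := by
        rw [natDegree_prod_of_monic _ _ fun x _ ↦ (monic_X_sub_C x).pow M]
        simp [mul_comm]
    _ ≤ f.natDegree := natDegree_le_of_dvd hdvd hf

end Polynomial

section Stepanov
variable {K : Type*} [Field K]

lemma exists_hasseDeriv_quotient {A P : K[X]} (hA : A ∈ hasseStable P) (hA0 : A ≠ 0) (k : ℕ) :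
    ∃ T : K[X] →ₗ[K] K[X], ∀ B, A * T B = P ^ k * hasseDeriv k (A * B) := by
  obtain ⟨divA, hdivA⟩ := (LinearMap.mulLeft K A).exists_leftInverse_of_injective
    (LinearMap.ker_eq_bot.2 (mul_right_injective₀ hA0))
  refine ⟨divA ∘ₗ LinearMap.mulLeft K (P ^ k) ∘ₗ hasseDeriv k ∘ₗ LinearMap.mulLeft K A,
    fun B ↦ ?_⟩
  obtain ⟨Q, hQ⟩ := dvd_pow_mul_hasseDeriv_mul hA B k
  have hdiv : divA (A * Q) = Q := LinearMap.congr_fun hdivA Q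
  simp [hQ, hdiv]

-- Where each `A i` takes the value `w i`, the `k`-th Hasse derivative of `∑ i, A i * c i` is, up to
-- `P ^ k`, a fixed linear image of `c` of low degree; requiring these images to vanish identically
-- leaves fewer equations than unknowns.
lemma exists_dvd_sum_of_hasseStable {ι : Type*} [Fintype ι] {P : K[X]} {A : ι → K[X]}
    (hA : ∀ i, A i ∈ hasseStable P) (hA0 : ∀ i, A i ≠ 0) (w : ι → K) {D M : ℕ}
    (hdim : ∑ k ∈ range M, (D + k * (P.natDegree - 1)) < Fintype.card ι * D) :
    ∃ c : ι → K[X], c ≠ 0 ∧ (∀ i, c i ∈ degreeLT K D) ∧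
      ∀ x, P.eval x ≠ 0 → (∀ i, (A i).eval x = w i) → (X - C x) ^ M ∣ ∑ i, A i * c i := by
  choose T hT using fun i ↦ exists_hasseDeriv_quotient (hA i) (hA0 i)
  let weighted (k : Fin M) : (ι → degreeLT K D) →ₗ[K] degreeLT K (D + k * (P.natDegree - 1)) :=
    ∑ i, w i • ((T i k ∘ₗ (degreeLT K D).subtype).codRestrict _
      (fun B ↦ mem_degreeLT_of_mul_eq_pow_mul_hasseDeriv (hA0 i) (hT i k B) B.2)) ∘ₗ
        LinearMap.proj i
  have hker : LinearMap.ker (LinearMap.pi weighted) ≠ ⊥ := by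
    apply LinearMap.ker_ne_bot_of_finrank_lt
    simpa [Module.finrank_pi_fintype, finrank_degreeLT, Fin.sum_univ_eq_sum_range
      (fun k ↦ D + k * (P.natDegree - 1))] using hdim
  obtain ⟨c, hc, hc0⟩ := Submodule.exists_mem_ne_zero_of_ne_bot hker
  refine ⟨fun i ↦ c i, fun h ↦ hc0 (funext fun i ↦ Subtype.ext (congrFun h i)),
    fun i ↦ (c i).2, fun x hx hw ↦ X_sub_C_pow_dvd_of_hasseDeriv fun k hk ↦ ?_⟩
  have hsum : ∑ i, w i • T i k (c i) = 0 := by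
    simpa [weighted] using congrArg Subtype.val (congrFun (LinearMap.mem_ker.1 hc) ⟨k, hk⟩)
  refine (mul_eq_zero_iff_left (pow_ne_zero k hx)).1 ?_
  calc P.eval x ^ k * (hasseDeriv k (∑ i, A i * (c i : K[X]))).eval x
      = ∑ i, (P ^ k * hasseDeriv k (A i * (c i : K[X]))).eval x := by
        simp [map_sum, eval_finsetSum, mul_sum]
    _ = (∑ i, w i • T i k (c i)).eval x := by
        simp [← hT, eval_finsetSum, hw]
    _ = 0 := by rw [hsum, eval_zero]

variable [Fintype K]

lemma X_pow_card_dvd_pow_card_sub_C (F : K[X]) :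
    X ^ Fintype.card K ∣ F ^ Fintype.card K - C (F.coeff 0) := by
  have h : X ∣ F - C (F.coeff 0) := by simp [X_dvd_iff]
  rw [← FiniteField.expand_card F]
  simpa using map_dvd (expand K (Fintype.card K)) h

variable {h : ℕ} (hcard : Fintype.card K = 2 * h + 1) {F : K[X]} (hF0 : F.coeff 0 ≠ 0)
  (hF : ¬ IsSquare (C (F.coeff 0) * F)) {D : ℕ} (hD : F.natDegree + 2 * D < h)
include hcard hF0 hF hD

lemma eq_zero_of_X_pow_dvd_add_pow_mul {a b : K[X]} (ha : a ∈ degreeLT K D)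
    (hb : b ∈ degreeLT K D) (hdvd : X ^ h ∣ a + F ^ h * b) : a = 0 ∧ b = 0 := by
  have hFa : F * a ^ 2 = C (F.coeff 0) * b ^ 2 := by
    have hX : X ^ h ∣ F * a ^ 2 - C (F.coeff 0) * b ^ 2 := by
      have hcongr : X ^ h ∣ F ^ Fintype.card K - C (F.coeff 0) :=
        (pow_dvd_pow X (by lia)).trans (X_pow_card_dvd_pow_card_sub_C F)
      rw [hcard] at hcongr
      -- `(a + F ^ h * b) * F * (a - F ^ h * b)` contains `F ^ (2 * h + 1) ≡ F(0)`.
      convert (hdvd.mul_right (F * (a - F ^ h * b))).add (hcongr.mul_right (b ^ 2)) using 1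
      ring
    refine sub_eq_zero.1 (eq_zero_of_dvd_of_natDegree_lt hX ?_)
    have ha' := natDegree_le_of_mem_degreeLT ha
    have hb' := natDegree_le_of_mem_degreeLT hb
    rw [natDegree_X_pow]
    refine (natDegree_sub_le_of_le (m := F.natDegree + 2 * D) (n := 2 * D) ?_ ?_).trans_lt
      (by simpa using hD)
    · exact natDegree_mul_le_of_le le_rfl (natDegree_pow_le_of_le 2 ha')
    · exact (natDegree_C_mul_le _ _).trans (natDegree_pow_le_of_le 2 hb')
  have ha0 : a = 0 := by
    by_contra ha0
    refine hF (isSquare_of_mul_sq_eq_sq ha0 (b := C (F.coeff 0) * b) ?_)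
    linear_combination C (F.coeff 0) * hFa
  exact ⟨ha0, by simpa [ha0, hF0] using hFa⟩

lemma eq_zero_of_sum_X_pow_mul_eq_zero {J : ℕ} {a b : Fin J → K[X]}
    (ha : ∀ j, a j ∈ degreeLT K D) (hb : ∀ j, b j ∈ degreeLT K D)
    (hsum : ∑ j : Fin J, X ^ (h * j) * (a j + F ^ h * b j) = 0) : a = 0 ∧ b = 0 := by
  induction J with
  | zero => exact ⟨Subsingleton.elim _ _, Subsingleton.elim _ _⟩
  | succ J ih =>
    have hsplit : (a 0 + F ^ h * b 0) +
        X ^ h * ∑ j : Fin J, X ^ (h * j) * (a j.succ + F ^ h * b j.succ) = 0 := by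
      rw [← hsum, Fin.sum_univ_succ, mul_sum]
      simp [mul_add, pow_add, mul_comm, mul_left_comm]
    obtain ⟨ha0, hb0⟩ := eq_zero_of_X_pow_dvd_add_pow_mul hcard hF0 hF hD (ha 0) (hb 0)
      (by rw [eq_neg_of_add_eq_zero_left hsplit]; exact (dvd_mul_right _ _).neg_right)
    rw [ha0, hb0, mul_zero, zero_add, zero_add] at hsplit
    obtain ⟨ha', hb'⟩ := ih (fun j ↦ ha j.succ) (fun j ↦ hb j.succ)
      ((mul_eq_zero_iff_left (pow_ne_zero h X_ne_zero)).1 hsplit)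
    exact ⟨funext (Fin.cases ha0 (congrFun ha')), funext (Fin.cases hb0 (congrFun hb'))⟩

theorem stepanov_bound {ε δ : K} (hε : ε ≠ 0) (hδ : δ ≠ 0) {J M : ℕ}
    (hdim : ∑ k ∈ range M, (D + k * F.natDegree) < (J + 1) * 2 * D) {Z : Finset K}
    (hZ : ∀ x ∈ Z, x ^ h = ε ∧ F.eval x ^ h = δ) :
    M * #Z ≤ h * (J + F.natDegree) + D := by
  have hh : h ≠ 0 := by lia
  have hFne : F ≠ 0 := by rintro rfl; simp at hF0
  let A (i : Fin (J + 1) × Fin 2) : K[X] := X ^ (h * i.1) * F ^ (h * i.2)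
  have hA i : A i ∈ hasseStable (X * F) := mul_mem
    (pow_mem (mem_hasseStable_of_dvd (dvd_mul_right _ _)) _)
    (pow_mem (mem_hasseStable_of_dvd (dvd_mul_left _ _)) _)
  have hA0 i : A i ≠ 0 := mul_ne_zero (pow_ne_zero _ X_ne_zero) (pow_ne_zero _ hFne)
  obtain ⟨c, hc0, hc, hdvd⟩ := exists_dvd_sum_of_hasseStable hA hA0
    (fun i ↦ ε ^ (i.1 : ℕ) * δ ^ (i.2 : ℕ)) (D := D) (M := M)
    (by simpa [natDegree_mul X_ne_zero hFne] using hdim)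
  have hne : ∑ i, A i * c i ≠ 0 := fun hsum ↦ hc0 <| by
    obtain ⟨h0, h1⟩ := eq_zero_of_sum_X_pow_mul_eq_zero hcard hF0 hF hD
      (fun j ↦ hc (j, 0)) (fun j ↦ hc (j, 1)) (by
        simpa [A, Fintype.sum_prod_type, mul_add, mul_assoc] using hsum)
    ext1 ⟨j, e⟩
    fin_cases e
    exacts [congrFun h0 j, congrFun h1 j]
  have hmult : ∀ x ∈ Z, (X - C x) ^ M ∣ ∑ i, A i * c i := fun x hx ↦ by
    obtain ⟨hxε, hFδ⟩ := hZ x hx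
    have hx0 : x ≠ 0 := by rintro rfl; exact hε (by rw [← hxε, zero_pow hh])
    have hFx0 : F.eval x ≠ 0 := fun h0 ↦ hδ (by rw [← hFδ, h0, zero_pow hh])
    exact hdvd x (by simp [hx0, hFx0]) fun i ↦ by simp [A, pow_mul, hxε, hFδ]
  refine (mul_card_le_natDegree hne hmult).trans (natDegree_sum_le_of_forall_le _ _ fun i _ ↦ ?_)
  have hi : h * (i.1 + i.2 * F.natDegree) ≤ h * (J + F.natDegree) := by
    have h1 : (i.1 : ℕ) ≤ J := by lia
    have h2 : (i.2 : ℕ) * F.natDegree ≤ 1 * F.natDegree := by gcongr; lia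
    gcongr; lia
  refine (natDegree_mul_le_of_le (natDegree_mul_le_of_le (natDegree_X_pow_le _)
    (natDegree_pow_le_of_le (h * i.2) le_rfl)) (natDegree_le_of_mem_degreeLT (hc i))).trans ?_
  lia

end Stepanov

section Nonsquares
variable {K : Type*} [Field K] [Fintype K] {h : ℕ} (hcard : Fintype.card K = 2 * h + 1)
include hcard

lemma ringChar_ne_two_of_card_eq : ringChar K ≠ 2 := fun h2 ↦ by
  have := FiniteField.even_card_of_char_two h2
  lia

lemma pow_eq_one_of_isSquare {x : K} (hx : IsSquare x) (hx0 : x ≠ 0) : x ^ h = 1 := by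
  rw [FiniteField.isSquare_iff (ringChar_ne_two_of_card_eq hcard) hx0] at hx
  rwa [show Fintype.card K / 2 = h by lia] at hx

lemma not_isSquare_of_pow_eq_neg_one {x : K} (hx : x ^ h = -1) : ¬ IsSquare x := fun hsq ↦ by
  have h2 := ringChar_ne_two_of_card_eq hcard
  have hx0 : x ≠ 0 := by
    rintro rfl
    have : h ≠ 0 := by have := Fintype.one_lt_card (α := K); lia
    simp [this] at hx
  exact Ring.neg_one_ne_one_of_char_ne_two h2 (by rw [← hx, pow_eq_one_of_isSquare hcard hsq hx0])

lemma pow_eq_neg_one_of_not_isSquare {x : K} (hx : ¬ IsSquare x) : x ^ h = -1 := by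
  have h2 := ringChar_ne_two_of_card_eq hcard
  have hx0 : x ≠ 0 := by rintro rfl; exact hx .zero
  rw [FiniteField.isSquare_iff h2 hx0] at hx
  rw [show h = Fintype.card K / 2 by lia]
  exact (FiniteField.pow_dichotomy h2 hx0).resolve_left hx

open Classical in
lemma le_card_not_isSquare_and_eval_ne_zero {F : K[X]} (hF : F ≠ 0) :
    h ≤ #{x : K | ¬ IsSquare x ∧ F.eval x ≠ 0} + F.natDegree := by
  have hh : h ≠ 0 := by have := Fintype.one_lt_card (α := K); lia
  have hne : (X ^ h - C 1 : K[X]) ≠ 0 := X_pow_sub_C_ne_zero (Nat.pos_of_ne_zero hh) 1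
  let G : K[X] := X * (X ^ h - C 1) * F
  have hG : G ≠ 0 := mul_ne_zero (mul_ne_zero X_ne_zero hne) hF
  have hcover : univ ⊆ ({x : K | ¬ IsSquare x ∧ F.eval x ≠ 0} : Finset K) ∪ G.roots.toFinset := by
    intro x _
    by_cases hgood : ¬ IsSquare x ∧ F.eval x ≠ 0
    · simp [hgood]
    have hroot : G.eval x = 0 := by
      obtain hx | hFx := not_and_or.1 hgood
      · obtain rfl | hx0 := eq_or_ne x 0
        · simp [G]
        · simp [G, pow_eq_one_of_isSquare hcard (not_not.1 hx) hx0]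
      · simp [G, not_not.1 hFx]
    exact mem_union_right _ (Multiset.mem_toFinset.2 ((mem_roots hG).2 hroot))
  have hdeg : #G.roots.toFinset ≤ 1 + h + F.natDegree :=
    calc #G.roots.toFinset ≤ G.natDegree := G.roots.toFinset_card_le.trans G.card_roots'
      _ ≤ 1 + h + F.natDegree := natDegree_mul_le_of_le
        (natDegree_mul_le_of_le natDegree_X_le (natDegree_X_pow_sub_C (R := K)).le) le_rfl
  have := (card_le_card hcover).trans (card_union_le _ _)
  rw [card_univ, hcard] at this
  lia

theorem exists_not_isSquare_eval_of_natDegree_eq_four {F : K[X]} (hdeg : F.natDegree = 4)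
    (hF0 : F.coeff 0 ≠ 0) (hF : ¬ IsSquare (C (F.coeff 0) * F)) (hh : 126 < h) :
    ∃ x, ¬ IsSquare x ∧ ¬ IsSquare (F.eval x) := by
  classical
  by_contra! hsq
  have hFne : F ≠ 0 := by rintro rfl; simp at hF0
  have hcount := le_card_not_isSquare_and_eval_ne_zero hcard hFne
  -- There are `∑ k < 14, (61 + 4 * k) = 1218` equations in `2 * 10 * 61 = 1220` unknowns, and the
  -- resulting bound `14 * (h - 4) ≤ 13 * h + 61` fails for `h > 117`.
  have hbound := stepanov_bound (D := 61) (J := 9) (M := 14) hcard hF0 hF (by lia)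
    (neg_ne_zero.2 one_ne_zero) one_ne_zero (by rw [hdeg]; decide)
    (Z := {x : K | ¬ IsSquare x ∧ F.eval x ≠ 0}) fun x hx ↦ by
      obtain ⟨hx, hFx⟩ := (mem_filter.1 hx).2
      exact ⟨pow_eq_neg_one_of_not_isSquare hcard hx,
        pow_eq_one_of_isSquare hcard (hsq x hx) hFx⟩
  lia

end Nonsquares

section Quartic
variable {K : Type*} [Field K]

/-- The polynomial `(X ^ 2 - 1) * (X ^ 2 + κ * X + 1)`. At an `x` with `x ^ 2 ≠ 1` its value differs
by a square factor from the solution `y` of `(x - x⁻¹) * y - (x + x⁻¹) = κ`. -/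
noncomputable def quartic (κ : K) : K[X] := (X ^ 2 - 1) * (X ^ 2 + C κ * X + 1)

@[simp]
lemma eval_quartic (κ x : K) : (quartic κ).eval x = (x ^ 2 - 1) * (x ^ 2 + κ * x + 1) := by
  simp [quartic]

lemma natDegree_quartic (κ : K) : (quartic κ).natDegree = 4 := by
  rw [quartic]; compute_degree!

lemma coeff_zero_quartic (κ : K) : (quartic κ).coeff 0 = -1 := by
  simp [quartic, mul_coeff_zero]

lemma not_isSquare_neg_quartic (h2 : (2 : K) ≠ 0) (κ : K) : ¬ IsSquare (-quartic κ) := by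
  rintro ⟨s, hs⟩
  -- The roots `1` and `-1` of a square are double roots.
  have hderiv x (hx : x ^ 2 = 1) : 2 * x * (2 + κ * x) = 0 := by
    have hsx : s.eval x = 0 := by
      simpa [hx] using congrArg (eval x) hs.symm
    have := congrArg (fun f ↦ (derivative f).eval x) hs
    simpa [quartic, hsx, hx, one_add_one_eq_two, add_right_comm] using this
  have hpos := hderiv 1 (by simp)
  have hneg := hderiv (-1) (by simp)
  have : (2 : K) ^ 3 = 0 := by linear_combination hpos - hneg
  exact h2 (pow_eq_zero_iff three_ne_zero |>.1 this)

variable [Fintype K]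

lemma exists_not_isSquare_quartic_of_card_mod_four_eq_three (hK : Fintype.card K % 4 = 3)
    (h9 : 9 < Fintype.card K) (κ : K) :
    ∃ x, ¬ IsSquare x ∧ ¬ IsSquare ((quartic κ).eval x) := by
  classical
  have hneg : ¬ IsSquare (-1 : K) := by simp [FiniteField.isSquare_neg_one_iff, hK]
  obtain ⟨h, hcard⟩ : ∃ h, Fintype.card K = 2 * h + 1 := ⟨Fintype.card K / 2, by lia⟩
  have hF : quartic κ ≠ 0 := fun h0 ↦ by simpa [h0] using natDegree_quartic κ
  obtain ⟨x, hx⟩ : ({x : K | ¬ IsSquare x ∧ (quartic κ).eval x ≠ 0} : Finset K).Nonempty := by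
    have := le_card_not_isSquare_and_eval_ne_zero hcard hF
    rw [natDegree_quartic] at this
    exact card_pos.1 (by lia)
  obtain ⟨hx, hFx⟩ := (mem_filter.1 hx).2
  by_cases hsq : IsSquare ((quartic κ).eval x)
  swap
  · exact ⟨x, hx, hsq⟩
  have hx0 : x ≠ 0 := by rintro rfl; exact hx .zero
  refine ⟨x⁻¹, by simpa using hx, fun hinv ↦ hneg ?_⟩
  have hreciprocal : -1 = (quartic κ).eval x⁻¹ / (quartic κ).eval x * (x ^ 2) ^ 2 := by
    rw [div_mul_eq_mul_div, eq_div_iff hFx]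
    simp only [eval_quartic]
    field_simp
    ring
  rw [hreciprocal]
  exact (hinv.div hsq).mul (.sq _)

end Quartic

section DigitArithmetic

/-- The value at `θ` of the polynomial whose coefficients are the base-`p` digits of `v`. In this
way the numbers below `p ^ n` encode the residues of polynomials over `ZMod p` modulo a monic
polynomial of degree `n`. -/
def digitEval {R : Type*} [Semiring R] (p : ℕ) (θ : R) (v : ℕ) : R :=
  Nat.ofDigits θ (Nat.digits p v)

/-- The code of `a + s * b`: the first `n` digits are combined modulo `p`, without carries. -/
def digitAddMul (p : ℕ) : ℕ → ℕ → ℕ → ℕ → ℕ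
  | 0, _, _, _ => 0
  | n + 1, s, a, b => (a + s * b) % p + p * digitAddMul p n s (a / p) (b / p)

/-- The code of `θ * v`, for `v < p ^ n`, when `θ ^ n` has code `c`: the digits are shifted, and the
digit leaving position `n - 1` is put back as a multiple of `c`. -/
def digitMulX (p n c v : ℕ) : ℕ :=
  digitAddMul p n (p * v / p ^ n) (p * v % p ^ n) c

lemma digitAddMul_lt {p : ℕ} (hp : 0 < p) (n s a b : ℕ) : digitAddMul p n s a b < p ^ n := by
  induction n generalizing a b with
  | zero => simp [digitAddMul]
  | succ n ih =>
    calc (a + s * b) % p + p * digitAddMul p n s (a / p) (b / p)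
        < p + p * digitAddMul p n s (a / p) (b / p) := by gcongr; exact Nat.mod_lt _ hp
      _ = p * (digitAddMul p n s (a / p) (b / p) + 1) := by ring
      _ ≤ p * p ^ n := by gcongr; exact ih _ _
      _ = p ^ (n + 1) := (pow_succ' p n).symm

lemma digitMulX_lt {p : ℕ} (hp : 0 < p) (n c v : ℕ) : digitMulX p n c v < p ^ n :=
  digitAddMul_lt hp ..

variable {R : Type*} [CommSemiring R] {p : ℕ}

@[simp]
lemma digitEval_zero (θ : R) : digitEval p θ 0 = 0 := by
  simp [digitEval, Nat.ofDigits]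

lemma map_digitEval {S : Type*} [CommSemiring S] (f : R →+* S) (θ : R) (v : ℕ) :
    f (digitEval p θ v) = digitEval p (f θ) v := by
  simp only [digitEval]
  induction Nat.digits p v with
  | nil => simp [Nat.ofDigits]
  | cons a l ih => simp_all [Nat.ofDigits]

variable (hp : 1 < p) (θ : R)
include hp

lemma digitEval_eq_mod_add_div (v : ℕ) :
    digitEval p θ v = (v % p : ℕ) + θ * digitEval p θ (v / p) := by
  obtain rfl | hv := eq_or_ne v 0
  · simp
  · rw [digitEval, Nat.digits_eq_cons_digits_div hp hv]; rfl

lemma digitEval_add_mul {a : ℕ} (ha : a < p) (v : ℕ) :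
    digitEval p θ (a + p * v) = a + θ * digitEval p θ v := by
  rw [digitEval_eq_mod_add_div hp, Nat.add_mul_mod_self_left, Nat.mod_eq_of_lt ha,
    Nat.add_mul_div_left _ _ (by lia), Nat.div_eq_of_lt ha, zero_add]

lemma digitEval_of_lt {a : ℕ} (ha : a < p) : digitEval p θ a = a := by
  simpa using digitEval_add_mul hp θ ha 0

lemma digitEval_eq_mod_pow_add_div_pow (n v : ℕ) :
    digitEval p θ v = digitEval p θ (v % p ^ n) + θ ^ n * digitEval p θ (v / p ^ n) := by
  induction n generalizing v with
  | zero => simp [Nat.mod_one]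
  | succ n ih =>
    rw [digitEval_eq_mod_add_div hp, ih (v / p), digitEval_eq_mod_add_div hp θ (v % p ^ (n + 1)),
      pow_succ' p, Nat.mod_mul_right_mod, Nat.mod_mul_right_div_self, Nat.div_div_eq_div_mul]
    ring

variable {θ} (hp0 : (p : R) = 0)
include hp0

lemma digitEval_digitAddMul {n a b : ℕ} (s : ℕ) (ha : a < p ^ n) (hb : b < p ^ n) :
    digitEval p θ (digitAddMul p n s a b) = digitEval p θ a + s * digitEval p θ b := by
  induction n generalizing a b with
  | zero => simp_all [digitAddMul]
  | succ n ih =>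
    have hcast (m : ℕ) : ((m % p : ℕ) : R) = m := by
      simpa [hp0] using congrArg (Nat.cast (R := R)) (Nat.mod_add_div m p)
    rw [digitAddMul, digitEval_add_mul hp θ (Nat.mod_lt _ (by lia)),
      ih (Nat.div_lt_of_lt_mul (by rwa [← pow_succ']))
        (Nat.div_lt_of_lt_mul (by rwa [← pow_succ'])),
      digitEval_eq_mod_add_div hp θ a, digitEval_eq_mod_add_div hp θ b]
    simp only [hcast, Nat.cast_add, Nat.cast_mul]
    ring

variable {n c : ℕ} (hc : c < p ^ n) (hθ : θ ^ n = digitEval p θ c)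
include hc hθ

lemma digitEval_digitMulX {v : ℕ} (hv : v < p ^ n) :
    digitEval p θ (digitMulX p n c v) = θ * digitEval p θ v := by
  have hcarry : p * v / p ^ n < p := Nat.div_lt_of_lt_mul (by rw [mul_comm (p ^ n)]; gcongr)
  calc digitEval p θ (digitMulX p n c v)
      = digitEval p θ (p * v % p ^ n) + θ ^ n * digitEval p θ (p * v / p ^ n) := by
        rw [digitMulX, digitEval_digitAddMul hp hp0 _ (Nat.mod_lt _ (by positivity)) hc, ← hθ,
          digitEval_of_lt hp θ hcarry, mul_comm (θ ^ n)]
    _ = θ * digitEval p θ v := by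
        rw [← digitEval_eq_mod_pow_add_div_pow hp, ← zero_add (p * v), digitEval_add_mul hp]
        · simp
        · lia

lemma digitEval_iterate_digitMulX (m : ℕ) {v : ℕ} (hv : v < p ^ n) :
    (digitMulX p n c)^[m] v < p ^ n ∧
      digitEval p θ ((digitMulX p n c)^[m] v) = θ ^ m * digitEval p θ v := by
  induction m with
  | zero => simpa using hv
  | succ m ih =>
    rw [Function.iterate_succ_apply']
    exact ⟨digitMulX_lt (by lia) .., by
      rw [digitEval_digitMulX hp hp0 hc hθ ih.1, ih.2, pow_succ', mul_assoc]⟩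

end DigitArithmetic

section Bitset

/-- The set of the members of `l`, as the binary digits of a natural number; this makes membership
tests fast in the kernel. -/
def bitset (l : List ℕ) : ℕ := l.foldr (fun v m ↦ m ||| 2 ^ v) 0

lemma testBit_bitset (l : List ℕ) (v : ℕ) : (bitset l).testBit v ↔ v ∈ l := by
  induction l with
  | nil => simp [bitset]
  | cons a l ih =>
    rw [show bitset (a :: l) = bitset l ||| 2 ^ a from rfl, Nat.testBit_or, Nat.testBit_two_pow,
      Bool.or_eq_true, ih, decide_eq_true_iff, List.mem_cons, or_comm, eq_comm]

lemma mem_of_bitset_eq_two_pow_sub_one {l : List ℕ} {N v : ℕ} (h : bitset l = 2 ^ N - 1)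
    (hv : v < N) : v ∈ l := by
  rw [← testBit_bitset, h, Nat.testBit_two_pow_sub_one, decide_eq_true hv]

end Bitset

section PowerLists

/-- The codes of the even powers `1, θ ^ 2, …, θ ^ (p ^ n - 3)`, for odd `p`, when `θ ^ n` has
code `c`. -/
def evenPowers (p n c : ℕ) : List ℕ := List.iterate (digitMulX p n c)^[2] 1 (p ^ n / 2)

/-- The codes of the odd powers `θ, θ ^ 3, …, θ ^ (p ^ n - 2)`, for odd `p`, when `θ ^ n` has
code `c`. -/
def oddPowers (p n c : ℕ) : List ℕ :=
  List.iterate (digitMulX p n c)^[2] (digitMulX p n c 1) (p ^ n / 2)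

/-- The test that, when `θ ^ n` has code `c`, the powers of `θ` exhaust the nonzero codes, with
`θ ^ (p ^ n / 2) = -1`. -/
def isPrimitiveRelation (p n c : ℕ) : Bool :=
  c < p ^ n && (digitMulX p n c)^[p ^ n / 2] 1 == p - 1 &&
    bitset (0 :: (evenPowers p n c ++ oddPowers p n c)) == 2 ^ p ^ n - 1

/-- The test that for every code `k` some odd power `x = θ ^ i` makes `(x - x⁻¹) * (k + x + x⁻¹)` an
odd power of `θ`. Reversing the list of odd powers inverts its entries. -/
def oddQuarticValues (p n c : ℕ) : Bool :=
  let evens := bitset (evenPowers p n c)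
  let odds := bitset (oddPowers p n c)
  (List.range (p ^ n)).all fun k ↦
    ((oddPowers p n c).zip (oddPowers p n c).reverse).any fun (x, y) ↦
      let u := digitAddMul p n (p - 1) x y
      let v := digitAddMul p n 1 k (digitAddMul p n 1 x y)
      evens.testBit u && odds.testBit v || odds.testBit u && evens.testBit v

end PowerLists

section Soundness

lemma lt_of_isPrimitiveRelation {p n c : ℕ} (hprim : isPrimitiveRelation p n c) : c < p ^ n := by
  simp only [isPrimitiveRelation, Bool.and_eq_true, decide_eq_true_eq] at hprim
  exact hprim.1.1

variable {R : Type*} [CommRing R] {p n c : ℕ} (hp : 1 < p) (hn : n ≠ 0) {θ : R}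
  (hp0 : (p : R) = 0) (hc : c < p ^ n) (hθ : θ ^ n = digitEval p θ c)

include hp hp0 in
lemma digitEval_sub_one : digitEval p θ (p - 1) = -1 := by
  rw [digitEval_of_lt hp θ (by lia), Nat.cast_pred (by lia), hp0, zero_sub]

include hp hn hp0 hc hθ

lemma digitEval_iterate_digitMulX_one (m : ℕ) :
    (digitMulX p n c)^[m] 1 < p ^ n ∧ digitEval p θ ((digitMulX p n c)^[m] 1) = θ ^ m := by
  simpa [digitEval_of_lt hp θ hp] using
    digitEval_iterate_digitMulX hp hp0 hc hθ m (Nat.one_lt_pow hn hp)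

lemma exists_digitEval_of_mem_evenPowers {v : ℕ} (hv : v ∈ evenPowers p n c) :
    ∃ m, digitEval p θ v = θ ^ (2 * m) := by
  obtain ⟨m, -, rfl⟩ := List.mem_iterate.1 hv
  rw [← Function.iterate_mul]
  exact ⟨m, (digitEval_iterate_digitMulX_one hp hn hp0 hc hθ (2 * m)).2⟩

lemma digitEval_getElem_oddPowers (i : ℕ) (hi : i < (oddPowers p n c).length) :
    (oddPowers p n c)[i] < p ^ n ∧ digitEval p θ (oddPowers p n c)[i] = θ ^ (2 * i + 1) := by
  simp only [oddPowers, List.getElem_iterate]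
  rw [← Function.iterate_mul, ← Function.iterate_succ_apply]
  exact digitEval_iterate_digitMulX_one hp hn hp0 hc hθ (2 * i + 1)

lemma exists_digitEval_of_mem_oddPowers {v : ℕ} (hv : v ∈ oddPowers p n c) :
    v < p ^ n ∧ ∃ m, digitEval p θ v = θ ^ (2 * m + 1) := by
  obtain ⟨i, hi, rfl⟩ := List.mem_iff_getElem.1 hv
  obtain ⟨hlt, hval⟩ := digitEval_getElem_oddPowers hp hn hp0 hc hθ i hi
  exact ⟨hlt, i, hval⟩

lemma digitEval_mul_eq_one_of_mem_zip_reverse (hone : θ ^ (2 * (p ^ n / 2)) = 1) {x y : ℕ}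
    (hxy : (x, y) ∈ (oddPowers p n c).zip (oddPowers p n c).reverse) :
    digitEval p θ x * digitEval p θ y = 1 := by
  obtain ⟨i, hi, hxy⟩ := List.mem_iff_getElem.1 hxy
  rw [List.getElem_zip, List.getElem_reverse, Prod.mk.injEq] at hxy
  obtain ⟨rfl, rfl⟩ := hxy
  have hlen : (oddPowers p n c).length = p ^ n / 2 := List.length_iterate ..
  rw [(digitEval_getElem_oddPowers hp hn hp0 hc hθ _ _).2,
    (digitEval_getElem_oddPowers hp hn hp0 hc hθ _ _).2, ← pow_add, ← hone]
  congr 1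
  simp only [List.length_zip, List.length_reverse, min_self] at hi
  lia

variable (hprim : isPrimitiveRelation p n c)
include hprim

omit hc in
lemma pow_half_eq_neg_one_of_isPrimitiveRelation : θ ^ (p ^ n / 2) = -1 := by
  have hc := lt_of_isPrimitiveRelation hprim
  simp only [isPrimitiveRelation, Bool.and_eq_true, decide_eq_true_eq, beq_iff_eq] at hprim
  rw [← (digitEval_iterate_digitMulX_one hp hn hp0 hc hθ _).2, hprim.1.2,
    digitEval_sub_one hp hp0]

omit hc in
lemma isField_of_isPrimitiveRelation [Nontrivial R]
    (hsurj : ∀ z : R, ∃ v < p ^ n, digitEval p θ v = z) : IsField R := by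
  have hneg := pow_half_eq_neg_one_of_isPrimitiveRelation hp hn hp0 hθ hprim
  have hc := lt_of_isPrimitiveRelation hprim
  simp only [isPrimitiveRelation, Bool.and_eq_true, decide_eq_true_eq, beq_iff_eq] at hprim
  obtain ⟨-, hset⟩ := hprim
  have hhalf : p ^ n / 2 ≠ 0 := by have := Nat.one_lt_pow hn hp; lia
  have hunit : IsUnit θ := (isUnit_pow_iff hhalf).1 (hneg ▸ isUnit_one.neg)
  refine ⟨⟨0, 1, zero_ne_one⟩, mul_comm, fun {z} hz ↦ ?_⟩
  obtain ⟨v, hv, rfl⟩ := hsurj z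
  have hpow : ∃ m, digitEval p θ v = θ ^ m := by
    have hmem := mem_of_bitset_eq_two_pow_sub_one hset hv
    rw [List.mem_cons, List.mem_append] at hmem
    obtain rfl | hv | hv := hmem
    · exact absurd (digitEval_zero θ) hz
    · exact ⟨_, (exists_digitEval_of_mem_evenPowers hp hn hp0 hc hθ hv).choose_spec⟩
    · exact ⟨_, (exists_digitEval_of_mem_oddPowers hp hn hp0 hc hθ hv).2.choose_spec⟩
  obtain ⟨m, hm⟩ := hpow
  exact (hm ▸ hunit.pow m).exists_right_inv

end Soundness

section Primitive
variable {p n c : ℕ}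

lemma exists_digitEval_X_eq [Fact p.Prime] {g : (ZMod p)[X]} (hg : g ∈ degreeLT (ZMod p) n) :
    ∃ v < p ^ n, digitEval p X v = g := by
  have hp := (Fact.out : p.Prime).one_lt
  induction n generalizing g with
  | zero => exact ⟨0, by simp, by simp_all [mem_degreeLT]⟩
  | succ n ih =>
    have hdivX : g.divX ∈ degreeLT (ZMod p) n := by
      rw [mem_degreeLT, degree_lt_iff_coeff_zero] at hg ⊢
      intro m hm
      rw [coeff_divX, hg _ (by lia)]
    obtain ⟨v, hv, hvg⟩ := ih hdivX
    refine ⟨(g.coeff 0).val + p * v, ?_, ?_⟩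
    · calc (g.coeff 0).val + p * v < p + p * v := by gcongr; exact ZMod.val_lt _
        _ = p * (v + 1) := by ring
        _ ≤ p ^ (n + 1) := by rw [pow_succ']; gcongr; exact hv
    · rw [digitEval_add_mul hp _ (ZMod.val_lt _), hvg, ← C_eq_natCast, ZMod.natCast_zmod_val]
      conv_rhs => rw [← divX_mul_X_add g]
      ring

lemma digitEval_X_mem_degreeLT [Fact p.Prime] {v : ℕ} (hv : v < p ^ n) :
    digitEval p X v ∈ degreeLT (ZMod p) n := by
  have hp := (Fact.out : p.Prime).one_lt
  induction n generalizing v with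
  | zero => simp_all
  | succ n ih =>
    have := ih (v := v / p) (Nat.div_lt_of_lt_mul (by rwa [← pow_succ']))
    rw [mem_degreeLT, degree_lt_iff_coeff_zero] at this ⊢
    rintro (_ | m) hm
    · lia
    · rw [digitEval_eq_mod_add_div hp, coeff_add, coeff_X_mul, this m (by lia), coeff_natCast_ite]
      simp

/-- The monic polynomial over `ZMod p` expressing the relation `θ ^ n = digitEval p θ c`. -/
noncomputable def relationPoly (p n c : ℕ) : (ZMod p)[X] := X ^ n - digitEval p X c

lemma root_pow_eq_digitEval :
    AdjoinRoot.root (relationPoly p n c) ^ n =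
      digitEval p (AdjoinRoot.root (relationPoly p n c)) c := by
  rw [← AdjoinRoot.mk_X, ← map_digitEval, ← map_pow]
  exact AdjoinRoot.mk_eq_mk.2 dvd_rfl

section RelationPoly
variable [Fact p.Prime] (hc : c < p ^ n)
include hc

lemma monic_relationPoly : (relationPoly p n c).Monic :=
  monic_X_pow_sub (mem_degreeLT.1 (digitEval_X_mem_degreeLT hc))

lemma natDegree_relationPoly : (relationPoly p n c).natDegree = n := by
  rw [relationPoly, natDegree_eq_of_degree_eq (degree_sub_eq_left_of_degree_lt ?_), natDegree_X_pow]
  rw [degree_X_pow]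
  exact mem_degreeLT.1 (digitEval_X_mem_degreeLT hc)

lemma exists_digitEval_root_eq (z : AdjoinRoot (relationPoly p n c)) :
    ∃ v < p ^ n, digitEval p (AdjoinRoot.root (relationPoly p n c)) v = z := by
  have hf := monic_relationPoly hc
  have hrem : AdjoinRoot.modByMonicHom hf z ∈ degreeLT (ZMod p) n := by
    obtain ⟨g, rfl⟩ := AdjoinRoot.mk_surjective z
    rw [AdjoinRoot.modByMonicHom_mk, mem_degreeLT]
    exact (degree_modByMonic_lt g hf).trans_eq
      (by rw [degree_eq_natDegree hf.ne_zero, natDegree_relationPoly hc])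
  obtain ⟨v, hv, hvz⟩ := exists_digitEval_X_eq hrem
  refine ⟨v, hv, ?_⟩
  rw [← AdjoinRoot.mk_X, ← map_digitEval, hvz]
  exact AdjoinRoot.mk_leftInverse hf z

lemma natCard_adjoinRoot_relationPoly : Nat.card (AdjoinRoot (relationPoly p n c)) = p ^ n := by
  have hf := monic_relationPoly hc
  have := hf.finite_adjoinRoot
  rw [Module.natCard_eq_pow_finrank (K := ZMod p), Nat.card_zmod,
    (AdjoinRoot.powerBasis' hf).finrank, AdjoinRoot.powerBasis'_dim, natDegree_relationPoly hc]

end RelationPoly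

lemma exists_digitEval_generator {K : Type*} [Field K] [Fintype K] (hp : p.Prime) (hn : n ≠ 0)
    (hcard : Fintype.card K = p ^ n) (hprim : isPrimitiveRelation p n c) :
    ∃ θ : K, θ ^ n = digitEval p θ c ∧ ∀ z : K, ∃ v < p ^ n, digitEval p θ v = z := by
  have : Fact p.Prime := ⟨hp⟩
  have hc := lt_of_isPrimitiveRelation hprim
  have hcardR := natCard_adjoinRoot_relationPoly hc
  have : Finite (AdjoinRoot (relationPoly p n c)) :=
    Nat.finite_of_card_ne_zero (hcardR ▸ (pow_pos hp.pos n).ne')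
  have : Nontrivial (AdjoinRoot (relationPoly p n c)) :=
    Finite.one_lt_card_iff_nontrivial.1 (hcardR ▸ Nat.one_lt_pow hn hp.one_lt)
  have := Fintype.ofFinite (AdjoinRoot (relationPoly p n c))
  have hp0 : (p : AdjoinRoot (relationPoly p n c)) = 0 := by
    rw [← map_natCast (AdjoinRoot.of _), CharP.cast_eq_zero, map_zero]
  -- The powers of the root exhaust the nonzero residues, so no irreducibility test is needed.
  let fieldR := (isField_of_isPrimitiveRelation hp.one_lt hn hp0 root_pow_eq_digitEval hprim
    (exists_digitEval_root_eq hc)).toField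
  let e : AdjoinRoot (relationPoly p n c) ≃+* K := FiniteField.ringEquivOfCardEq <| by
    rw [hcard, ← hcardR, Nat.card_eq_fintype_card]
  refine ⟨e (AdjoinRoot.root _), ?_, fun z ↦ ?_⟩
  · rw [← map_pow, root_pow_eq_digitEval]
    exact map_digitEval e.toRingHom _ c
  · obtain ⟨v, hv, hvz⟩ := exists_digitEval_root_eq hc (e.symm z)
    refine ⟨v, hv, ?_⟩
    rw [← e.apply_symm_apply z, ← hvz]
    exact (map_digitEval e.toRingHom _ v).symm

end Primitive

section SmallQuartic
variable {K : Type*} [Field K] {p n c : ℕ}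

lemma not_isSquare_pow_two_mul_add_one {θ : K} (hθ : ¬ IsSquare θ) (m : ℕ) :
    ¬ IsSquare (θ ^ (2 * m + 1)) := fun hsq ↦ by
  have hθ0 : θ ≠ 0 := by rintro rfl; exact hθ .zero
  refine hθ ?_
  rw [← mul_div_cancel_left₀ θ (pow_ne_zero (2 * m) hθ0), ← pow_succ]
  exact hsq.div (even_two_mul m |>.isSquare_pow θ)

lemma exists_quartic_eval_eq_pow (hp : 1 < p) (hn : n ≠ 0) {θ : K} (hp0 : (p : K) = 0)
    (hθ : θ ^ n = digitEval p θ c) (hprim : isPrimitiveRelation p n c)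
    (hval : oddQuarticValues p n c) {k : ℕ} (hk : k < p ^ n) :
    ∃ i m : ℕ, (quartic (digitEval p θ k)).eval (θ ^ (2 * i + 1)) = θ ^ (2 * m + 1) := by
  have hc := lt_of_isPrimitiveRelation hprim
  have hhalf := pow_half_eq_neg_one_of_isPrimitiveRelation hp hn hp0 hθ hprim
  have hone : θ ^ (2 * (p ^ n / 2)) = 1 := by rw [mul_comm, pow_mul, hhalf, neg_one_sq]
  simp only [oddQuarticValues, List.all_eq_true, List.any_eq_true, List.mem_range, Prod.exists,
    Bool.or_eq_true, Bool.and_eq_true, testBit_bitset] at hval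
  obtain ⟨x, y, hxy, hparity⟩ := hval k hk
  have hinv := digitEval_mul_eq_one_of_mem_zip_reverse hp hn hp0 hc hθ hone hxy
  obtain ⟨hx, i, hxi⟩ := exists_digitEval_of_mem_oddPowers hp hn hp0 hc hθ (List.of_mem_zip hxy).1
  have hy := (exists_digitEval_of_mem_oddPowers hp hn hp0 hc hθ
    (List.mem_reverse.1 (List.of_mem_zip hxy).2)).1
  have hsub := digitEval_digitAddMul hp (θ := θ) hp0 (p - 1) hx hy
  have hadd : digitEval p θ (digitAddMul p n 1 k (digitAddMul p n 1 x y)) =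
      digitEval p θ k + (digitEval p θ x + digitEval p θ y) := by
    rw [digitEval_digitAddMul hp hp0 1 hk (digitAddMul_lt (by lia) ..),
      digitEval_digitAddMul hp hp0 1 hx hy]
    simp
  rw [Nat.cast_pred (by lia), hp0] at hsub
  have hfactor : (quartic (digitEval p θ k)).eval (θ ^ (2 * i + 1)) = (θ ^ (2 * i + 1)) ^ 2 *
      (digitEval p θ (digitAddMul p n (p - 1) x y) *
        digitEval p θ (digitAddMul p n 1 k (digitAddMul p n 1 x y))) := by
    rw [eval_quartic, hsub, hadd, ← hxi]
    linear_combination (digitEval p θ k * digitEval p θ x + 1 +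
      digitEval p θ x * digitEval p θ y) * hinv
  rcases hparity with ⟨hu, hv⟩ | ⟨hu, hv⟩
  · obtain ⟨a, ha⟩ := exists_digitEval_of_mem_evenPowers hp hn hp0 hc hθ hu
    obtain ⟨-, b, hb⟩ := exists_digitEval_of_mem_oddPowers hp hn hp0 hc hθ hv
    exact ⟨i, 2 * i + 1 + a + b, by rw [hfactor, ha, hb]; ring⟩
  · obtain ⟨-, a, ha⟩ := exists_digitEval_of_mem_oddPowers hp hn hp0 hc hθ hu
    obtain ⟨b, hb⟩ := exists_digitEval_of_mem_evenPowers hp hn hp0 hc hθ hv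
    exact ⟨i, 2 * i + 1 + a + b, by rw [hfactor, ha, hb]; ring⟩

lemma exists_not_isSquare_quartic_of_oddQuarticValues [Fintype K] (hp : p.Prime) (hn : n ≠ 0)
    (hcard : Fintype.card K = p ^ n) (hodd : p ^ n % 2 = 1) (hprim : isPrimitiveRelation p n c)
    (hval : oddQuarticValues p n c) (κ : K) :
    ∃ x, ¬ IsSquare x ∧ ¬ IsSquare ((quartic κ).eval x) := by
  obtain ⟨θ, hθ, hsurj⟩ := exists_digitEval_generator hp hn hcard hprim
  have hp0 : (p : K) = 0 := by
    rw [← pow_eq_zero_iff hn, ← Nat.cast_pow, ← hcard, FiniteField.cast_card_eq_zero]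
  have hθsq : ¬ IsSquare θ := not_isSquare_of_pow_eq_neg_one (h := p ^ n / 2) (by lia)
    (pow_half_eq_neg_one_of_isPrimitiveRelation hp.one_lt hn hp0 hθ hprim)
  obtain ⟨k, hk, rfl⟩ := hsurj κ
  obtain ⟨i, m, hm⟩ := exists_quartic_eval_eq_pow hp.one_lt hn hp0 hθ hprim hval hk
  refine ⟨θ ^ (2 * i + 1), not_isSquare_pow_two_mul_add_one hθsq i, ?_⟩
  rw [hm]
  exact not_isSquare_pow_two_mul_add_one hθsq m

end SmallQuartic

section SmallFields

/-- The fields with `p ^ n` elements, `45 < p ^ n < 257` and `p ^ n % 4 = 1`, as triples `(p, n, c)`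
where `c` is the code of `θ ^ n` for a generator `θ` of the multiplicative group. -/
def smallFields : List (ℕ × ℕ × ℕ) :=
  [(53, 1, 2), (61, 1, 2), (73, 1, 5), (89, 1, 3), (97, 1, 5), (101, 1, 2), (109, 1, 6),
    (113, 1, 3), (137, 1, 3), (149, 1, 2), (157, 1, 5), (173, 1, 2), (181, 1, 2), (193, 1, 5),
    (197, 1, 2), (229, 1, 6), (233, 1, 3), (241, 1, 7),
    (7, 2, 11), (3, 4, 28), (11, 2, 53), (5, 3, 12), (13, 2, 24)]

lemma isPrimitiveRelation_and_oddQuarticValues_of_mem_smallFields :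
    ∀ t ∈ smallFields, isPrimitiveRelation t.1 t.2.1 t.2.2 && oddQuarticValues t.1 t.2.1 t.2.2 := by
  decide +kernel

lemma exists_mem_smallFields : ∀ p < 257, ∀ n < 9,
    p.Prime ∧ 45 < p ^ n ∧ p ^ n < 257 ∧ p ^ n % 4 = 1 →
      ∃ t ∈ smallFields, t.1 = p ∧ t.2.1 = n := by
  decide +kernel

end SmallFields

section Conclusion
variable {K : Type*} [Field K]

theorem exists_not_isSquare_quartic [Fintype K] (h2 : ringChar K ≠ 2)
    (h45 : 45 < Fintype.card K) (κ : K) :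
    ∃ x, ¬ IsSquare x ∧ ¬ IsSquare ((quartic κ).eval x) := by
  have hodd := FiniteField.odd_card_of_char_ne_two h2
  obtain hmod | hmod : Fintype.card K % 4 = 3 ∨ Fintype.card K % 4 = 1 := by lia
  · exact exists_not_isSquare_quartic_of_card_mod_four_eq_three hmod (by lia) κ
  obtain hlarge | hsmall := le_or_gt 257 (Fintype.card K)
  · refine exists_not_isSquare_eval_of_natDegree_eq_four (h := Fintype.card K / 2) (by lia)
      (natDegree_quartic κ) (by simp [coeff_zero_quartic]) ?_ (by lia)
    simpa [coeff_zero_quartic] using not_isSquare_neg_quartic (Ring.two_ne_zero h2) κ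
  obtain ⟨p, _, n, hp, hcard⟩ := FiniteField.card' K
  rw [hcard] at h45 hsmall hmod
  have hp257 : p < 257 := (Nat.le_self_pow n.ne_zero p).trans_lt hsmall
  have hn9 : (n : ℕ) < 9 := (Nat.pow_lt_pow_iff_right one_lt_two).1 <|
    (Nat.pow_le_pow_left hp.two_le n).trans_lt (hsmall.trans (by norm_num))
  obtain ⟨⟨_, _, c⟩, ht, rfl, hn⟩ :=
    exists_mem_smallFields p hp257 n hn9 ⟨hp, h45, hsmall, hmod⟩
  obtain rfl := hn
  have hcheck := isPrimitiveRelation_and_oddQuarticValues_of_mem_smallFields _ ht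
  rw [Bool.and_eq_true] at hcheck
  exact exists_not_isSquare_quartic_of_oddQuarticValues hp n.ne_zero hcard (by lia)
    hcheck.1 hcheck.2 κ

lemma exists_odd_zpow_eq_of_not_isSquare {g : Kˣ} (hg : ∀ x : Kˣ, x ∈ Subgroup.zpowers g) {x : K}
    (hx : ¬ IsSquare x) : ∃ m : ℤ, Odd m ∧ (g ^ m : Kˣ) = x := by
  have hx0 : x ≠ 0 := by rintro rfl; exact hx .zero
  obtain ⟨m, hm⟩ := Subgroup.mem_zpowers_iff.1 (hg (.mk0 x hx0))
  have hmx : ((g ^ m : Kˣ) : K) = x := by rw [hm, Units.val_mk0]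
  refine ⟨m, Int.not_even_iff_odd.1 fun hm2 ↦ hx ?_, hmx⟩
  rw [← hmx]
  exact (hm2.isSquare_zpow g).map (Units.coeHom K)

end Conclusion

theorem stmt_17 (q r : ℕ) (hq : q.Prime) (hq2 : q ≠ 2) (hr : 0 < r)
    (h45 : 45 < q ^ r)
    (K : Type) [Field K] [Fintype K] (hcard : Fintype.card K = q ^ r)
    (g : Kˣ) (hg : ∀ x : Kˣ, x ∈ Subgroup.zpowers g) :
    ∀ k : K, ∃ m n : ℤ, Odd m ∧ Odd n ∧
      (((g ^ m : Kˣ) : K) - ((g ^ (-m) : Kˣ) : K)) * ((g ^ n : Kˣ) : K)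
        - (((g ^ m : Kˣ) : K) + ((g ^ (-m) : Kˣ) : K)) = k := by
  intro k
  have h2 : ringChar K ≠ 2 := fun h ↦ by
    have := (hq.odd_of_ne_two hq2).pow (n := r)
    rw [← hcard, Nat.odd_iff, FiniteField.even_card_of_char_two h] at this
    exact zero_ne_one this
  obtain ⟨x, hx, hFx⟩ := exists_not_isSquare_quartic h2 (hcard ▸ h45) k
  rw [eval_quartic] at hFx
  have hx0 : x ≠ 0 := by rintro rfl; exact hx .zero
  have hx1 : x ^ 2 - 1 ≠ 0 := fun h ↦ hFx (by simp [h])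
  have hy : ¬ IsSquare ((x ^ 2 + k * x + 1) / (x ^ 2 - 1)) := fun hy ↦ hFx <| by
    rw [← mul_div_cancel_left₀ (x ^ 2 + k * x + 1) hx1, mul_div_assoc, ← mul_assoc]
    exact (IsSquare.mul_self _).mul hy
  obtain ⟨m, hm, hmx⟩ := exists_odd_zpow_eq_of_not_isSquare hg hx
  obtain ⟨n, hn, hny⟩ := exists_odd_zpow_eq_of_not_isSquare hg hy
  refine ⟨m, n, hm, hn, ?_⟩
  rw [zpow_neg, Units.val_inv_eq_inv_val, hmx, hny]
  field_simp
  ring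
end

section
/- Let p be a prime with p ≡ 1 (mod 4), t, b positive integers with t² + 4 = b²p, and 𝓕 the associated Lucas sequence. Then for all nonnegative integers ν and all positive integers n, if p^ν divides n then p^ν divides 𝓕_n. -/
/-!
In `R[ω]/(ω² = Pω - Q)` the coefficient of `ω` in `ω ^ n` is the Lucas sequence `Uₙ(P, Q)`. Since
every `z` there satisfies `z² = tr(z) z - N(z)`, the `ω`-coefficient of `z ^ m` is that of `z` times
`Uₘ(tr z, N z)`, whose discriminant `tr(z)² - 4 N(z)` is a multiple of `P² - 4Q`. Modulo its
discriminant, a Lucas sequence behaves as for a double root: `2ᵏ Uₖ₊₁ ≡ (k + 1) Pᵏ`. So if `m` is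
odd and divides `P² - 4Q`, raising to the `m`-th power gains a factor `m` in the `ω`-coefficient;
iterate this `ν` times, starting from a power of `ω`.
-/

open QuadraticAlgebra

variable {R : Type*} [CommRing R]

/-- The Lucas sequence of the first kind `Uₙ(P, Q)`, in the classical sign convention: its
characteristic polynomial is `X² - P X + Q`, of discriminant `P² - 4Q`. -/
def lucasU (P Q : R) : ℕ → R
  | 0 => 0
  | 1 => 1
  | n + 2 => P * lucasU P Q (n + 1) - Q * lucasU P Q n

theorem eq_lucasU_of_recurrence {P Q : R} {f : ℕ → R} (h_zero : f 0 = 0) (h_one : f 1 = 1)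
    (h_add_two : ∀ k, f (k + 2) = P * f (k + 1) - Q * f k) (n : ℕ) : f n = lucasU P Q n := by
  induction n using Nat.twoStepInduction with
  | zero => exact h_zero
  | one => exact h_one
  | more n ih ih_succ => rw [h_add_two, ih, ih_succ, lucasU]

theorem discr_dvd_two_pow_mul_lucasU_succ_sub (P Q : R) (k : ℕ) :
    P ^ 2 - 4 * Q ∣ 2 ^ k * lucasU P Q (k + 1) - (k + 1) * P ^ k := by
  induction k using Nat.twoStepInduction with
  | zero => simp [lucasU]
  | one => simp [lucasU, one_add_one_eq_two]
  | more k ih ih_succ =>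
    obtain ⟨c, hc⟩ := ih
    obtain ⟨d, hd⟩ := ih_succ
    refine ⟨2 * P * d - 4 * Q * c + (k + 1) * P ^ k, ?_⟩
    rw [lucasU]
    push_cast at hd ⊢
    linear_combination 2 * P * hd - 4 * Q * hc

theorem natCast_dvd_lucasU_self {P Q : R} {m : ℕ} (hm : Odd m)
    (h_discr : (m : R) ∣ P ^ 2 - 4 * Q) : (m : R) ∣ lucasU P Q m := by
  obtain ⟨k, rfl⟩ : ∃ k, m = k + 1 := ⟨m - 1, by have := hm.pos; omega⟩
  have h_coprime : IsCoprime ((k + 1 : ℕ) : R) (2 ^ k) := by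
    exact_mod_cast (Nat.coprime_two_right.mpr hm).cast.pow_right
  have h_two_pow : ((k + 1 : ℕ) : R) ∣ 2 ^ k * lucasU P Q (k + 1) := by
    rw [← dvd_sub_left (dvd_mul_right _ (P ^ k))]
    exact_mod_cast h_discr.trans (discr_dvd_two_pow_mul_lucasU_succ_sub P Q k)
  exact h_coprime.dvd_of_dvd_mul_left h_two_pow

section

variable {a b : R}

theorem im_pow_eq_im_mul_lucasU (z : QuadraticAlgebra R a b) (n : ℕ) :
    (z ^ n).im = z.im * lucasU (trace z) (norm z) n := by
  induction n using Nat.twoStepInduction with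
  | zero => simp [lucasU]
  | one => simp [lucasU]
  | more n ih ih_succ =>
    have h_pow : z ^ (n + 2) = trace z • z ^ (n + 1) - norm z • z ^ n := by
      rw [pow_add, sq_eq_trace_smul_sub_norm, ← C_eq_algebraMap, mul_sub, mul_C_eq_smul,
        mul_smul_comm, pow_succ]
    rw [h_pow, im_sub, im_smul, im_smul, ih, ih_succ, lucasU]
    simp only [smul_eq_mul]
    ring

theorem trace_sq_sub_four_mul_norm (z : QuadraticAlgebra R a b) :
    trace z ^ 2 - 4 * norm z = (b ^ 2 + 4 * a) * z.im ^ 2 := by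
  rw [trace_def, norm_def]
  ring

theorem natCast_mul_im_dvd_im_pow {m : ℕ} (hm : Odd m) (h_discr : (m : R) ∣ b ^ 2 + 4 * a)
    (z : QuadraticAlgebra R a b) : m * z.im ∣ (z ^ m).im := by
  rw [im_pow_eq_im_mul_lucasU, mul_comm]
  refine mul_dvd_mul_left _ (natCast_dvd_lucasU_self hm ?_)
  rw [trace_sq_sub_four_mul_norm]
  exact h_discr.mul_right _

theorem natCast_pow_mul_im_dvd_im_pow_pow {m : ℕ} (hm : Odd m)
    (h_discr : (m : R) ∣ b ^ 2 + 4 * a) (z : QuadraticAlgebra R a b) (ν : ℕ) :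
    m ^ ν * z.im ∣ (z ^ m ^ ν).im := by
  induction ν with
  | zero => simp
  | succ ν ih =>
    calc (m : R) ^ (ν + 1) * z.im = m * (m ^ ν * z.im) := by ring
      _ ∣ m * (z ^ m ^ ν).im := mul_dvd_mul_left _ ih
      _ ∣ ((z ^ m ^ ν) ^ m).im := natCast_mul_im_dvd_im_pow hm h_discr _
      _ = (z ^ m ^ (ν + 1)).im := by rw [← pow_mul, pow_succ]

end

theorem lucasU_eq_im_omega_pow (P Q : R) (n : ℕ) :
    lucasU P Q n = ((ω : QuadraticAlgebra R (-Q) P) ^ n).im := by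
  simp [im_pow_eq_im_mul_lucasU, norm_def]

theorem natCast_pow_mul_lucasU_dvd {P Q : R} {m : ℕ} (hm : Odd m)
    (h_discr : (m : R) ∣ P ^ 2 - 4 * Q) (ν n : ℕ) :
    m ^ ν * lucasU P Q n ∣ lucasU P Q (m ^ ν * n) := by
  rw [lucasU_eq_im_omega_pow, lucasU_eq_im_omega_pow, mul_comm _ n, pow_mul]
  refine natCast_pow_mul_im_dvd_im_pow_pow hm ?_ _ ν
  rwa [mul_neg, ← sub_eq_add_neg]

theorem stmt_18_general {P Q : R} {m : ℕ} (hm : Odd m) (h_discr : (m : R) ∣ P ^ 2 - 4 * Q)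
    {f : ℕ → R} (h_zero : f 0 = 0) (h_one : f 1 = 1)
    (h_add_two : ∀ k, f (k + 2) = P * f (k + 1) - Q * f k) {ν n : ℕ} (hn : m ^ ν ∣ n) :
    (m : R) ^ ν ∣ f n := by
  obtain ⟨c, rfl⟩ := hn
  rw [eq_lucasU_of_recurrence h_zero h_one h_add_two]
  exact dvd_of_mul_right_dvd (natCast_pow_mul_lucasU_dvd hm h_discr ν c)

theorem stmt_18 (p : ℕ) (hp : p.Prime) (hp4 : p % 4 = 1)
    (t b : ℤ) (ht : 0 < t) (hb : 0 < b)
    (hpt : t ^ 2 + 4 = b ^ 2 * (p : ℤ))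
    (F : ℤ → ℤ) (hF0 : F 0 = 0) (hF1 : F 1 = 1)
    (hF : ∀ k : ℤ, F (k + 2) = t * F (k + 1) + F k) :
    ∀ (ν : ℕ) (n : ℕ), 0 < n → p ^ ν ∣ n → ((p : ℤ)) ^ ν ∣ F (n : ℤ) := fun _ _ _ hn ↦
  stmt_18_general (P := t) (Q := -1) (f := fun n ↦ F n) (Nat.odd_iff.mpr (by omega))
    ⟨b ^ 2, by linear_combination hpt⟩ hF0 hF1 (fun k ↦ by simpa using hF k) hn
end
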